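/- Let 1 ≤ q < p ≤ ∞ and define r by 1/q = 1/p + 1/r, and suppose r = 2. Then there is an absolute constant c such that for every bounded linear operator T : X → Y between real Banach spaces whose rank is at most n one has π_{p,q}(T) ≤ c · π_{p,q}^{m}(T), where m = ⌊n(1 + ln n)⌋. -/

import Mathlib

open scoped ENNReal NNReal BigOperators

noncomputable section

/-- The `ℓ_p`-sum `(∑ i, f i ^ p) ^ (1/p)` of a finite family in `ℝ≥0∞`,
with the usual sup-modification for `p = ∞`. -/
def eSum (p : ℝ≥0∞) {ι : Type*} [Fintype ι] (f : ι → ℝ≥0∞) : ℝ≥0∞ :=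
  if p = ∞ then ⨆ i, f i else (∑ i, f i ^ p.toReal) ^ (1 / p.toReal)

/-- The weak `ℓ_q`-norm of a finite family of vectors:
`sup { (∑ k |⟨x_k, x*⟩|^q)^(1/q) : x* in the unit ball of the dual }`. -/
def weakLq (q : ℝ≥0∞) {X : Type*} [NormedAddCommGroup X] [NormedSpace ℝ X]
    {n : ℕ} (x : Fin n → X) : ℝ≥0∞ :=
  ⨆ f : {f : X →L[ℝ] ℝ // ‖f‖ ≤ 1}, eSum q fun k => ENNReal.ofReal |f.1 (x k)|

/-- The `(p,q)`-summing norm of `T` with respect to `n` vectors. -/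
def piN (p q : ℝ≥0∞) {X Y : Type*} [NormedAddCommGroup X] [NormedSpace ℝ X]
    [NormedAddCommGroup Y] [NormedSpace ℝ Y] (n : ℕ) (T : X →L[ℝ] Y) : ℝ≥0∞ :=
  ⨆ x : {x : Fin n → X // weakLq q x ≤ 1}, eSum p fun k => ENNReal.ofReal ‖T (x.1 k)‖

/-- The `(p,q)`-summing norm of `T`. -/
def piPQ (p q : ℝ≥0∞) {X Y : Type*} [NormedAddCommGroup X] [NormedSpace ℝ X]
    [NormedAddCommGroup Y] [NormedSpace ℝ Y] (T : X →L[ℝ] Y) : ℝ≥0∞ :=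
  ⨆ n : ℕ, piN p q n T

/-- `T` has rank at most `n`: its range is a finite-dimensional subspace of
dimension at most `n`. -/
def RankLE {X Y : Type*} [NormedAddCommGroup X] [NormedSpace ℝ X]
    [NormedAddCommGroup Y] [NormedSpace ℝ Y] (T : X →L[ℝ] Y) (n : ℕ) : Prop :=
  FiniteDimensional ℝ (LinearMap.range (T : X →ₗ[ℝ] Y)) ∧
    Module.finrank ℝ (LinearMap.range (T : X →ₗ[ℝ] Y)) ≤ n

/-- The average of `‖∑ k, ε k • x k‖²` over all `2^n` sign choices `ε ∈ {-1,1}^n`. -/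
def radAvg {X : Type*} [NormedAddCommGroup X] [NormedSpace ℝ X] {n : ℕ}
    (x : Fin n → X) : ℝ :=
  (∑ ε : Fin n → Bool, ‖∑ k, (if ε k then (1 : ℝ) else -1) • x k‖ ^ 2) / 2 ^ n

/-- The Rademacher cotype `q` constant of `T` with respect to `n` vectors. -/
def cotypeN (q : ℝ) {X Y : Type*} [NormedAddCommGroup X] [NormedSpace ℝ X]
    [NormedAddCommGroup Y] [NormedSpace ℝ Y] (n : ℕ) (T : X →L[ℝ] Y) : ℝ≥0∞ :=
  ⨆ x : {x : Fin n → X // Real.sqrt (radAvg x) ≤ 1},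
    (∑ k, ENNReal.ofReal ‖T (x.1 k)‖ ^ q) ^ (1 / q)

/-- The Rademacher cotype `q` constant of `T`. -/
def cotype (q : ℝ) {X Y : Type*} [NormedAddCommGroup X] [NormedSpace ℝ X]
    [NormedAddCommGroup Y] [NormedSpace ℝ Y] (T : X →L[ℝ] Y) : ℝ≥0∞ :=
  ⨆ n : ℕ, cotypeN q n T

/-!
Suppose `π_{p,q}^N(T) ^ p ≤ C` and let `K ≤ N` vectors `x i` in the weak `ℓ_q` ball satisfy
`‖T (x i)‖ ≥ t`. Signed sums over disjoint blocks `A`, divided by `#A ^ (1 - 1 / q)`, again lie in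
the weak `ℓ_q` ball, so after discarding at most half of the vectors all signed sums over blocks `A`
have norm at most `τ * √(#A)`, with `τ ^ p = 2 * C / K`; the exponent `1 / 2` is where
`1 / q = 1 / p + 1 / 2` enters. Hence every norm one functional takes values on the remaining
`T (x i)` whose squares sum to at most `τ ^ 2 * (1 + log K)`. The matrix of norming functionals of
the `T (x i)` evaluated at the `T (x i)` has rank at most `n`, and comparing its trace with its
Hilbert-Schmidt norm yields `t ^ 2 ≤ τ ^ 2 * (2 * n * (1 + log K) / K)`.

Applied to the `K` vectors with the largest images, this bounds the `K`-th largest `‖T (x i)‖ ^ p`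
by `4 * n * C * (1 + log K) / K ^ 2`. Summed over `K` beyond a large multiple of `n * (1 + log n)`
this is at most `C / 2`. For `C = π_{p,q}^N(T) ^ p` this half is absorbed, and only the first
`O(n * (1 + log n))` vectors matter.
-/

section Trace

open Module

lemma sum_sq_norm_starProjection {E ι : Type*} [NormedAddCommGroup E] [InnerProductSpace ℝ E]
    [FiniteDimensional ℝ E] [Fintype ι] (e : OrthonormalBasis ι ℝ E) (U : Submodule ℝ E) :
    ∑ i, ‖U.starProjection (e i)‖ ^ 2 = finrank ℝ U := by
  have hproj : LinearMap.IsProj U (U.starProjection : E →ₗ[ℝ] E) :=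
    ⟨U.starProjection_apply_mem, fun _ => U.starProjection_eq_self_iff.2⟩
  rw [← hproj.trace, LinearMap.trace_eq_sum_inner _ e]
  refine Finset.sum_congr rfl fun i _ => ?_
  rw [ContinuousLinearMap.coe_coe, real_inner_comm]
  exact (U.re_inner_starProjection_eq_normSq (e i)).symm

/-- For `u i = A (e i)` the left side is `(tr A) ^ 2` and the last sum is the squared
Hilbert-Schmidt norm of `A`. -/
lemma sq_sum_inner_le_finrank_mul {E ι : Type*} [NormedAddCommGroup E] [InnerProductSpace ℝ E]
    [FiniteDimensional ℝ E] [Fintype ι] (e : OrthonormalBasis ι ℝ E) (U : Submodule ℝ E)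
    (u : ι → U) : (∑ i, inner ℝ (e i) (u i : E)) ^ 2 ≤ finrank ℝ U * ∑ i, ‖u i‖ ^ 2 := by
  have hproj (i : ι) : inner ℝ (e i) (u i : E) = inner ℝ (U.starProjection (e i)) (u i : E) := by
    rw [U.inner_starProjection_left_eq_right, U.starProjection_eq_self_iff.2 (u i).2]
  have habs : |∑ i, inner ℝ (e i) (u i : E)| ≤ ∑ i, ‖U.starProjection (e i)‖ * ‖u i‖ := by
    refine (Finset.abs_sum_le_sum_abs _ _).trans (Finset.sum_le_sum fun i _ => ?_)
    rw [hproj]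
    exact abs_real_inner_le_norm _ _
  calc (∑ i, inner ℝ (e i) (u i : E)) ^ 2
      ≤ (∑ i, ‖U.starProjection (e i)‖ * ‖u i‖) ^ 2 := sq_le_sq' (abs_le.1 habs).1 (abs_le.1 habs).2
    _ ≤ (∑ i, ‖U.starProjection (e i)‖ ^ 2) * ∑ i, ‖u i‖ ^ 2 :=
        Finset.sum_mul_sq_le_sq_mul_sq _ _ _
    _ = finrank ℝ U * ∑ i, ‖u i‖ ^ 2 := by rw [sum_sq_norm_starProjection]

lemma sq_sum_apply_le_finrank_mul {V ι : Type*} [AddCommGroup V] [Module ℝ V]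
    [FiniteDimensional ℝ V] [Fintype ι] (v : ι → V) (φ : ι → Dual ℝ V) :
    (∑ i, φ i (v i)) ^ 2 ≤ finrank ℝ V * ∑ i, ∑ k, φ k (v i) ^ 2 := by
  classical
  let Φ : V →ₗ[ℝ] EuclideanSpace ℝ ι :=
    (WithLp.linearEquiv 2 ℝ (ι → ℝ)).symm.toLinearMap ∘ₗ LinearMap.pi φ
  have hΦ (w : V) (k : ι) : Φ w k = φ k w := rfl
  have h := sq_sum_inner_le_finrank_mul (EuclideanSpace.basisFun ι ℝ) (LinearMap.range Φ)
    fun i => Φ.rangeRestrict (v i)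
  simp only [LinearMap.codRestrict_apply, Submodule.coe_norm, EuclideanSpace.norm_sq_eq,
    EuclideanSpace.basisFun_inner, Real.norm_eq_abs, sq_abs, hΦ] at h
  refine h.trans ?_
  gcongr
  exact Φ.finrank_range_le

end Trace

section LorentzBound

open Finset Module

lemma sum_sq_le_harmonic {ι : Type*} {τ : ℝ} {G : Finset ι} {y : ι → ℝ}
    (h : ∀ A ⊆ G, ∑ i ∈ A, |y i| ≤ τ * √(#A)) : ∑ i ∈ G, y i ^ 2 ≤ τ ^ 2 * harmonic #G := by
  classical
  induction G using Finset.induction_on_min_value (fun i => |y i|) with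
  | empty => simp
  | insert i G hi hmin ih =>
    have hpos : (0 : ℝ) < #G + 1 := by positivity
    have hsum : (#G + 1) * |y i| ≤ τ * √(#G + 1) := by
      have hlower := card_nsmul_le_sum (insert i G) (fun j => |y j|) |y i|
        (by simpa using hmin)
      have hupper := h _ subset_rfl
      rw [card_insert_of_notMem hi] at hlower hupper
      push_cast [nsmul_eq_mul] at hlower hupper
      exact hlower.trans hupper
    have hmin_sq : y i ^ 2 ≤ τ ^ 2 * (#G + 1 : ℝ)⁻¹ := by
      have hsq : ((#G + 1) * |y i|) ^ 2 ≤ (τ * √(#G + 1)) ^ 2 := by gcongr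
      rw [mul_pow, mul_pow, sq_abs, Real.sq_sqrt hpos.le] at hsq
      rw [← div_eq_mul_inv, le_div_iff₀ hpos]
      nlinarith
    have hrest := ih fun A hA => h A (hA.trans (subset_insert _ _))
    rw [sum_insert hi, card_insert_of_notMem hi, harmonic_succ]
    push_cast
    linarith

variable {ι Y : Type*} [NormedAddCommGroup Y] [NormedSpace ℝ Y]

/-- The signed sums of the vectors `y i`, `i ∈ A`, have norm at most `τ * #A ^ α` for every
`A ⊆ s`; for `α = 1 / 2` this bounds by `τ` the norm of `e i ↦ y i` on the Lorentz space
`ℓ_{2,1}`. Coefficients in `[-1, 1]` are allowed in place of signs, which is equivalent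
by convexity. -/
def SignedSumsLE (τ α : ℝ) (s : Finset ι) (y : ι → Y) : Prop :=
  ∀ A ⊆ s, ∀ ε : ι → ℝ, (∀ i, |ε i| ≤ 1) → ‖∑ i ∈ A, ε i • y i‖ ≤ τ * (#A : ℝ) ^ α

namespace SignedSumsLE

variable {τ α : ℝ} {s : Finset ι} {y : ι → Y}

lemma sum_abs_le (h : SignedSumsLE τ α s y) {g : Y →L[ℝ] ℝ} (hg : ‖g‖ ≤ 1) {A : Finset ι}
    (hA : A ⊆ s) : ∑ i ∈ A, |g (y i)| ≤ τ * (#A : ℝ) ^ α := by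
  let ε : ι → ℝ := fun i => SignType.sign (g (y i))
  have hε (i : ι) : |ε i| ≤ 1 := by
    rcases hs : SignType.sign (g (y i)) with _ | _ | _ <;> simp [ε, hs]
  calc ∑ i ∈ A, |g (y i)| = g (∑ i ∈ A, ε i • y i) := by
        simp only [ε, map_sum, map_smul, smul_eq_mul, sign_mul_self]
    _ ≤ ‖g (∑ i ∈ A, ε i • y i)‖ := le_abs_self _
    _ ≤ ‖∑ i ∈ A, ε i • y i‖ := g.le_of_opNorm_le_of_le hg le_rfl |>.trans_eq (one_mul _)
    _ ≤ τ * (#A : ℝ) ^ α := h A hA ε hε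

lemma sum_sq_le (h : SignedSumsLE τ (1 / 2) s y) {g : Y →L[ℝ] ℝ} (hg : ‖g‖ ≤ 1) :
    ∑ i ∈ s, g (y i) ^ 2 ≤ τ ^ 2 * (1 + Real.log #s) := by
  refine (sum_sq_le_harmonic (τ := τ) fun A hA => ?_).trans ?_
  · rw [Real.sqrt_eq_rpow]
    exact h.sum_abs_le hg hA
  · gcongr
    exact harmonic_le_one_add_log _

/-- Testing the `y i` against norming functionals `g k`, the matrix `g k (y i)` has rank at most
`finrank ℝ V`, trace `∑ i, ‖y i‖`, and rows of logarithmic `ℓ_2`-norm. -/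
lemma sq_sum_norm_le (h : SignedSumsLE τ (1 / 2) s y) {V : Submodule ℝ Y}
    [FiniteDimensional ℝ V] (hV : ∀ i, y i ∈ V) :
    (∑ i ∈ s, ‖y i‖) ^ 2 ≤ finrank ℝ V * (#s * (τ ^ 2 * (1 + Real.log #s))) := by
  choose g hg_norm hg_apply using fun i : ι => exists_dual_vector'' ℝ (y i)
  have htrace := sq_sum_apply_le_finrank_mul (ι := s) (fun i => (⟨y i, hV i⟩ : V))
    fun k => (g k : Y →ₗ[ℝ] ℝ) ∘ₗ V.subtype
  simp only [LinearMap.comp_apply, Submodule.subtype_apply, ContinuousLinearMap.coe_coe, hg_apply,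
    RCLike.ofReal_real_eq_id, id] at htrace
  rw [sum_coe_sort s fun i => ‖y i‖] at htrace
  have hHS : ∑ i : s, ∑ k : s, g k (y i) ^ 2 ≤ #s * (τ ^ 2 * (1 + Real.log #s)) := by
    rw [sum_comm]
    calc ∑ k : s, ∑ i : s, g k (y i) ^ 2 ≤ ∑ _k : s, τ ^ 2 * (1 + Real.log #s) :=
          sum_le_sum fun k _ =>
            (sum_coe_sort s fun i => g k (y i) ^ 2).trans_le (h.sum_sq_le (hg_norm k))
      _ = #s * (τ ^ 2 * (1 + Real.log #s)) := by simp
  exact htrace.trans (by gcongr)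

end SignedSumsLE

end LorentzBound

section WeakBall

open Finset

lemma exists_pairwiseDisjoint_forall_subset_sdiff_not {ι : Type*} [DecidableEq ι]
    {P : Finset ι → Prop} (hP : ¬P ∅) (s : Finset ι) :
    ∃ 𝒜 : Finset (Finset ι), (∀ A ∈ 𝒜, A ⊆ s ∧ P A) ∧
      (𝒜 : Set (Finset ι)).PairwiseDisjoint id ∧ ∀ A ⊆ s \ 𝒜.biUnion id, ¬P A := by
  induction s using Finset.strongInduction with
  | H s ih =>
  by_cases hs : ∃ A ⊆ s, P A
  · obtain ⟨A, hAs, hA⟩ := hs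
    have hA_ne : A.Nonempty := nonempty_iff_ne_empty.2 (by rintro rfl; exact hP hA)
    obtain ⟨𝒜, h𝒜, hdisj, hmax⟩ := ih (s \ A) (sdiff_ssubset hAs hA_ne)
    refine ⟨insert A 𝒜, ?_, ?_, ?_⟩
    · simp only [mem_insert, forall_eq_or_imp]
      exact ⟨⟨hAs, hA⟩, fun B hB => ⟨(h𝒜 B hB).1.trans sdiff_subset, (h𝒜 B hB).2⟩⟩
    · rw [coe_insert]
      exact hdisj.insert fun B hB _ => disjoint_sdiff.mono_right (h𝒜 B hB).1
    · rwa [biUnion_insert, id, ← sup_eq_union, ← sdiff_sdiff_left]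
  · exact ⟨∅, by simp, by simp, by simpa using hs⟩

lemma abs_rpow_card_mul_sum_rpow_le {ι : Type*} {q : ℝ} (hq : 1 ≤ q) (A : Finset ι)
    {ε a : ι → ℝ} (hε : ∀ i, |ε i| ≤ 1) :
    |(#A : ℝ) ^ (1 / q - 1) * ∑ i ∈ A, ε i * a i| ^ q ≤ ∑ i ∈ A, |a i| ^ q := by
  have hq0 : 0 < q := by linarith
  rcases A.eq_empty_or_nonempty with rfl | hA
  · simp [hq0.ne']
  have hcard : (0 : ℝ) < #A := by exact_mod_cast hA.card_pos
  have habs : |(#A : ℝ) ^ (1 / q - 1) * ∑ i ∈ A, ε i * a i| ≤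
      (#A : ℝ) ^ (1 / q - 1) * ∑ i ∈ A, |a i| := by
    rw [abs_mul, abs_of_nonneg (by positivity)]
    gcongr
    refine (abs_sum_le_sum_abs _ _).trans (sum_le_sum fun i _ => ?_)
    rw [abs_mul]
    exact mul_le_of_le_one_left (abs_nonneg _) (hε i)
  calc |(#A : ℝ) ^ (1 / q - 1) * ∑ i ∈ A, ε i * a i| ^ q
      ≤ ((#A : ℝ) ^ (1 / q - 1) * ∑ i ∈ A, |a i|) ^ q := by gcongr
    _ = (#A : ℝ) ^ (1 - q) * (∑ i ∈ A, |a i|) ^ q := by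
        rw [Real.mul_rpow (by positivity) (by positivity), ← Real.rpow_mul hcard.le]
        congr 2
        field_simp
    _ ≤ (#A : ℝ) ^ (1 - q) * ((#A : ℝ) ^ (q - 1) * ∑ i ∈ A, |a i| ^ q) := by
        gcongr
        exact Real.rpow_sum_le_const_mul_sum_rpow A a hq
    _ = ∑ i ∈ A, |a i| ^ q := by
        rw [← mul_assoc, ← Real.rpow_add hcard]
        simp

variable {ι X : Type*} [NormedAddCommGroup X] [NormedSpace ℝ X]

/-- The family `(x i)_{i ∈ s}` has weak `ℓ_q`-norm at most one; `weakLq_le_one_iff` relates this to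
`weakLq`. Indexing by a finset makes it convenient to discard and to regroup vectors. -/
def InWeakLqBall (q : ℝ) (s : Finset ι) (x : ι → X) : Prop :=
  ∀ f : X →L[ℝ] ℝ, ‖f‖ ≤ 1 → ∑ i ∈ s, |f (x i)| ^ q ≤ 1

namespace InWeakLqBall

variable {q : ℝ} {s t : Finset ι} {x : ι → X}

lemma mono (h : InWeakLqBall q s x) (hts : t ⊆ s) : InWeakLqBall q t x := fun f hf =>
  (sum_le_sum_of_subset_of_nonneg hts fun _ _ _ => by positivity).trans (h f hf)

lemma norm_le_one (h : InWeakLqBall q s x) (hq : 0 < q) {i : ι} (hi : i ∈ s) : ‖x i‖ ≤ 1 := by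
  obtain ⟨f, hf_norm, hf_apply⟩ := exists_dual_vector'' ℝ (x i)
  have hi_le : ∑ j ∈ {i}, |f (x j)| ^ q ≤ 1 := h.mono (singleton_subset_iff.2 hi) f hf_norm
  rw [sum_singleton, hf_apply, RCLike.ofReal_real_eq_id, id, abs_norm] at hi_le
  exact le_of_not_gt fun hgt => (Real.one_lt_rpow hgt hq).not_ge hi_le

lemma regroup (h : InWeakLqBall q s x) (hq : 1 ≤ q) {𝒜 : Finset (Finset ι)}
    (hsub : ∀ A ∈ 𝒜, A ⊆ s) (hdisj : (𝒜 : Set (Finset ι)).PairwiseDisjoint id)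
    {ε : Finset ι → ι → ℝ} (hε : ∀ A ∈ 𝒜, ∀ i, |ε A i| ≤ 1) :
    InWeakLqBall q 𝒜 fun A => (#A : ℝ) ^ (1 / q - 1) • ∑ i ∈ A, ε A i • x i := by
  classical
  intro f hf
  simp only [map_smul, map_sum, smul_eq_mul]
  calc ∑ A ∈ 𝒜, |(#A : ℝ) ^ (1 / q - 1) * ∑ i ∈ A, ε A i * f (x i)| ^ q
      ≤ ∑ A ∈ 𝒜, ∑ i ∈ A, |f (x i)| ^ q :=
        sum_le_sum fun A hA => abs_rpow_card_mul_sum_rpow_le hq A (hε A hA)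
    _ = ∑ i ∈ 𝒜.biUnion id, |f (x i)| ^ q := (sum_biUnion hdisj).symm
    _ ≤ 1 := h.mono (biUnion_subset.2 hsub) f hf

end InWeakLqBall

end WeakBall

section LogTail

/-- An antiderivative of `-(1 + log x) / x ^ 2`, used to sum `∑ (1 + log k) / k ^ 2`. -/
def logTail (x : ℝ) : ℝ := (2 + Real.log x) / x

lemma logTail_natCast_nonneg (k : ℕ) : 0 ≤ logTail k :=
  div_nonneg (by linarith [Real.log_natCast_nonneg k]) k.cast_nonneg

lemma antitoneOn_logTail : AntitoneOn logTail (Set.Ici (Real.exp 1)) := by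
  intro x hx y hy hxy
  have hx0 : 0 < x := (Real.exp_pos 1).trans_le hx
  simp only [logTail, add_div]
  have hlog := Real.log_div_self_antitoneOn hx hy hxy
  dsimp only at hlog
  gcongr

lemma one_add_log_div_le_logTail {a b : ℝ} (ha : Real.exp 1 ≤ a) (hab : a ≤ b) :
    (1 + Real.log b) / b ≤ logTail a := by
  have hb : 0 < b := (Real.exp_pos 1).trans_le (ha.trans hab)
  calc (1 + Real.log b) / b ≤ logTail b := by
        rw [logTail]
        gcongr
        norm_num
    _ ≤ logTail a := antitoneOn_logTail ha (ha.trans hab) hab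

lemma one_add_log_div_sq_le_logTail_sub {a : ℝ} (ha : 2 ≤ a) :
    (1 + Real.log (a + 1)) / (a + 1) ^ 2 ≤ logTail a - logTail (a + 1) := by
  have ha0 : 0 < a := by linarith
  have hstep : Real.log (a + 1) - 1 / a ≤ Real.log a := by
    have hlog := Real.log_le_sub_one_of_pos (x := (a + 1) / a) (by positivity)
    rw [Real.log_div (by positivity) ha0.ne', add_div, div_self ha0.ne'] at hlog
    linarith
  have hlog_one : 1 ≤ Real.log (a + 1) := by
    rw [Real.le_log_iff_exp_le (by positivity)]
    linarith [Real.exp_one_lt_three]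
  set L := Real.log (a + 1)
  have hgap : (2 + (L - 1 / a)) / a - (2 + L) / (a + 1) - (1 + L) / (a + 1) ^ 2
      = ((1 + L) * a - (a + 1)) / (a ^ 2 * (a + 1) ^ 2) := by
    field_simp
    ring
  have hgap_nonneg : 0 ≤ ((1 + L) * a - (a + 1)) / (a ^ 2 * (a + 1) ^ 2) :=
    div_nonneg (by nlinarith) (by positivity)
  have hleft : (2 + (L - 1 / a)) / a ≤ logTail a := by
    rw [logTail]
    gcongr
  change _ ≤ logTail a - (2 + L) / (a + 1)
  linarith

end LogTail

section SummingBound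

open Finset

lemma two_le_of_one_div_eq {p q : ℝ} (hq : 1 ≤ q) (hp : 0 < p) (hpq : 1 / q = 1 / p + 1 / 2) :
    2 ≤ p := by
  have hq_inv : 1 / q ≤ 1 := (div_le_one (by linarith)).2 hq
  exact (one_div_le_one_div hp two_pos).1 (by linarith)

lemma rpow_le_rpow_mul_of_sq_le_sq_mul {p t τ w : ℝ} (hp : 2 ≤ p) (ht : 0 ≤ t) (hτ : 0 ≤ τ)
    (hw0 : 0 ≤ w) (hw1 : w ≤ 1) (h : t ^ 2 ≤ τ ^ 2 * w) : t ^ p ≤ τ ^ p * w := by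
  have hsq {a : ℝ} (ha : 0 ≤ a) : (a ^ 2) ^ (p / 2) = a ^ p := by
    rw [← Real.rpow_natCast, ← Real.rpow_mul ha]
    congr 1
    push_cast
    ring
  calc t ^ p = (t ^ 2) ^ (p / 2) := (hsq ht).symm
    _ ≤ (τ ^ 2 * w) ^ (p / 2) := by gcongr
    _ = τ ^ p * w ^ (p / 2) := by rw [Real.mul_rpow (by positivity) hw0, hsq hτ]
    _ ≤ τ ^ p * w := by
        gcongr
        exact Real.rpow_le_self_of_le_one hw0 hw1 (by linarith)

variable {X Y : Type*} [NormedAddCommGroup X] [NormedSpace ℝ X]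
  [NormedAddCommGroup Y] [NormedSpace ℝ Y]

/-- The inequality `π_{p,q}^N(T) ≤ C ^ (1 / p)` for finite exponents; see
`piN_le_ofReal_rpow_iff`. Arbitrary finite index types in place of `Fin N` allow subfamilies and
regrouped families to be used without reindexing. -/
def IsSummingBound (p q : ℝ) (T : X →L[ℝ] Y) (N : ℕ) (C : ℝ) : Prop :=
  ∀ ⦃ι : Type⦄ (s : Finset ι) (x : ι → X), #s ≤ N → InWeakLqBall q s x →
    ∑ i ∈ s, ‖T (x i)‖ ^ p ≤ C

lemma isSummingBound_mul_opNorm_rpow {p q : ℝ} (hp : 0 ≤ p) (hq : 0 < q) (T : X →L[ℝ] Y) (N : ℕ) :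
    IsSummingBound p q T N (N * ‖T‖ ^ p) := by
  intro ι s x hs hx
  calc ∑ i ∈ s, ‖T (x i)‖ ^ p ≤ #s • ‖T‖ ^ p := sum_le_card_nsmul _ _ _ fun i hi => by
        gcongr
        exact T.unit_le_opNorm _ (hx.norm_le_one hq hi)
    _ ≤ N * ‖T‖ ^ p := by
        rw [nsmul_eq_mul]
        gcongr

namespace IsSummingBound

variable {p q : ℝ} {T : X →L[ℝ] Y} {M N : ℕ} {B C : ℝ} {ι : Type} {s : Finset ι} {x : ι → X}

protected lemma add (hB : IsSummingBound p q T M B) (hC : IsSummingBound p q T N C) :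
    IsSummingBound p q T (M + N) (B + C) := by
  classical
  intro ι s x hs hx
  obtain ⟨u, hu, hu_card⟩ := exists_subset_card_eq (min_le_right M #s)
  have hrest_card : #(s \ u) ≤ N := by
    rw [card_sdiff_of_subset hu]
    omega
  rw [← sum_sdiff hu, add_comm B]
  exact add_le_add (hC _ x hrest_card (hx.mono sdiff_subset))
    (hB u x (hu_card.trans_le (min_le_left _ _)) (hx.mono hu))

lemma nat_mul (hC : IsSummingBound p q T N C) (k : ℕ) : IsSummingBound p q T (k * N) (k * C) := by
  induction k with
  | zero =>
    intro ι s x hs _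
    have hs_empty : s = ∅ := card_eq_zero.1 (by omega)
    simp [hs_empty]
  | succ k ih =>
    rw [Nat.succ_mul, Nat.cast_succ, add_one_mul]
    exact ih.add hC

lemma rpow_mul_card_biUnion_le [DecidableEq ι] (hC : IsSummingBound p q T N C) (hq : 1 ≤ q)
    (hp : 0 < p) (hs : #s ≤ N) (hx : InWeakLqBall q s x) {τ : ℝ} (hτ : 0 ≤ τ)
    {𝒜 : Finset (Finset ι)} (hsub : ∀ A ∈ 𝒜, A ⊆ s) (hne : ∀ A ∈ 𝒜, A.Nonempty)
    (hdisj : (𝒜 : Set (Finset ι)).PairwiseDisjoint id) {ε : Finset ι → ι → ℝ}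
    (hε : ∀ A ∈ 𝒜, ∀ i, |ε A i| ≤ 1)
    (hlarge : ∀ A ∈ 𝒜, τ * (#A : ℝ) ^ (1 + 1 / p - 1 / q) ≤ ‖∑ i ∈ A, ε A i • T (x i)‖) :
    τ ^ p * #(𝒜.biUnion id) ≤ C := by
  have h𝒜_card : #𝒜 ≤ N :=
    (card_le_card_biUnion hdisj hne).trans ((card_le_card (biUnion_subset.2 hsub)).trans hs)
  have hterm (A : Finset ι) (hA : A ∈ 𝒜) :
      τ ^ p * #A ≤ ‖T ((#A : ℝ) ^ (1 / q - 1) • ∑ i ∈ A, ε A i • x i)‖ ^ p := by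
    have hcard : (0 : ℝ) < #A := by exact_mod_cast (hne A hA).card_pos
    calc τ ^ p * #A = (τ * (#A : ℝ) ^ (1 / p)) ^ p := by
          rw [Real.mul_rpow hτ (by positivity), ← Real.rpow_mul hcard.le,
            one_div_mul_cancel hp.ne', Real.rpow_one]
      _ = ((#A : ℝ) ^ (1 / q - 1) * (τ * (#A : ℝ) ^ (1 + 1 / p - 1 / q))) ^ p := by
          rw [mul_left_comm, ← Real.rpow_add hcard]
          ring_nf
      _ ≤ ((#A : ℝ) ^ (1 / q - 1) * ‖∑ i ∈ A, ε A i • T (x i)‖) ^ p := by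
          gcongr
          exact hlarge A hA
      _ = ‖T ((#A : ℝ) ^ (1 / q - 1) • ∑ i ∈ A, ε A i • x i)‖ ^ p := by
          simp only [map_smul, map_sum, norm_smul,
            Real.norm_of_nonneg (Real.rpow_nonneg hcard.le _)]
  calc τ ^ p * #(𝒜.biUnion id) = ∑ A ∈ 𝒜, τ ^ p * #A := by
        rw [card_biUnion hdisj, Nat.cast_sum, mul_sum]
        rfl
    _ ≤ ∑ A ∈ 𝒜, ‖T ((#A : ℝ) ^ (1 / q - 1) • ∑ i ∈ A, ε A i • x i)‖ ^ p := sum_le_sum hterm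
    _ ≤ C := hC 𝒜 _ h𝒜_card (hx.regroup hq hsub hdisj hε)

/-- Discard a maximal disjoint family of sets with a large signed sum. Normalized, these signed
sums again lie in the weak `ℓ_q` ball, so the assumed bound limits how much is discarded. -/
lemma exists_signedSumsLE [DecidableEq ι] (hC : IsSummingBound p q T N C) (hq : 1 ≤ q)
    (hp : 0 < p) (hs : #s ≤ N) (hx : InWeakLqBall q s x) {τ : ℝ} (hτ : 0 ≤ τ) :
    ∃ G ⊆ s, τ ^ p * #(s \ G) ≤ C ∧
      SignedSumsLE τ (1 + 1 / p - 1 / q) G fun i => T (x i) := by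
  let IsLarge (A : Finset ι) : Prop := ∃ ε : ι → ℝ, (∀ i, |ε i| ≤ 1) ∧
    τ * (#A : ℝ) ^ (1 + 1 / p - 1 / q) < ‖∑ i ∈ A, ε i • T (x i)‖
  have hempty : ¬IsLarge ∅ := by
    rintro ⟨ε, -, hlt⟩
    rw [sum_empty, norm_zero] at hlt
    exact hlt.not_ge (by positivity)
  obtain ⟨𝒜, h𝒜, hdisj, hmax⟩ := exists_pairwiseDisjoint_forall_subset_sdiff_not hempty s
  have hsub (A : Finset ι) (hA : A ∈ 𝒜) : A ⊆ s := (h𝒜 A hA).1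
  have hne (A : Finset ι) (hA : A ∈ 𝒜) : A.Nonempty :=
    nonempty_iff_ne_empty.2 fun h => hempty (h ▸ (h𝒜 A hA).2)
  choose! ε hε hlarge using fun A hA => (h𝒜 A hA).2
  refine ⟨s \ 𝒜.biUnion id, sdiff_subset, ?_, fun A hA ε hε => ?_⟩
  · rw [Finset.sdiff_sdiff_eq_self (t := 𝒜.biUnion id) (biUnion_subset.2 hsub)]
    exact hC.rpow_mul_card_biUnion_le hq hp hs hx hτ hsub hne hdisj hε fun A hA =>
      (hlarge A hA).le
  · exact le_of_not_gt fun hlt => hmax A hA ⟨ε, hε, hlt⟩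

lemma exists_signedSumsLE_card_le (hC : IsSummingBound p q T N C) (hC0 : 0 < C) (hq : 1 ≤ q)
    (hp : 0 < p) (hs : #s ≤ N) (hx : InWeakLqBall q s x) :
    ∃ G ⊆ s, #s ≤ 2 * #G ∧
      SignedSumsLE ((2 * C / #s) ^ (1 / p)) (1 + 1 / p - 1 / q) G fun i => T (x i) := by
  classical
  rcases s.eq_empty_or_nonempty with rfl | hs0
  · exact ⟨∅, by simp, by simp, fun A hA ε _ => by
      rw [subset_empty.1 hA, sum_empty, norm_zero]; positivity⟩
  obtain ⟨G, hGs, hsdiff, hG⟩ :=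
    hC.exists_signedSumsLE hq hp hs hx (τ := (2 * C / #s) ^ (1 / p)) (by positivity)
  have hcard : (0 : ℝ) < #s := by exact_mod_cast hs0.card_pos
  rw [← Real.rpow_mul (by positivity), one_div_mul_cancel hp.ne', Real.rpow_one,
    cast_card_sdiff hGs, div_mul_eq_mul_div, div_le_iff₀ hcard] at hsdiff
  refine ⟨G, hGs, ?_, hG⟩
  have : (#s : ℝ) ≤ 2 * #G := le_of_mul_le_mul_left (by linarith) hC0
  exact_mod_cast this

variable {n : ℕ}

lemma rpow_le_of_forall_le_norm (hC : IsSummingBound p q T N C) (hC0 : 0 < C) (hq : 1 ≤ q)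
    (hp : 0 < p) (hpq : 1 / q = 1 / p + 1 / 2) (hT : RankLE T n) (hs : #s ≤ N)
    (hs0 : s.Nonempty) (hx : InWeakLqBall q s x) {t : ℝ} (ht : 0 ≤ t)
    (hts : ∀ i ∈ s, t ≤ ‖T (x i)‖) (hsmall : 2 * n * (1 + Real.log #s) / #s ≤ 1) :
    t ^ p ≤ 2 * C / #s * (2 * n * (1 + Real.log #s) / #s) := by
  obtain ⟨hfin, hrank⟩ := hT
  obtain ⟨G, hGs, hG_card, hG⟩ := hC.exists_signedSumsLE_card_le hC0 hq hp hs hx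
  rw [show 1 + 1 / p - 1 / q = 1 / 2 by linarith] at hG
  set τ := (2 * C / #s) ^ (1 / p) with hτ
  have hτp : τ ^ p = 2 * C / #s := by
    rw [hτ, ← Real.rpow_mul (by positivity), one_div_mul_cancel hp.ne', Real.rpow_one]
  set ℓ := 1 + Real.log #s with hℓ
  have hℓ0 : 0 ≤ ℓ := by linarith [Real.log_natCast_nonneg #s]
  have hs_pos : (0 : ℝ) < #s := by exact_mod_cast hs0.card_pos
  have hs_le : (#s : ℝ) ≤ 2 * #G := by exact_mod_cast hG_card
  have hG_pos : (0 : ℝ) < #G := by linarith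
  have hsum : #G * t ≤ ∑ i ∈ G, ‖T (x i)‖ := by
    simpa using card_nsmul_le_sum G (fun i => ‖T (x i)‖) t fun i hi => hts i (hGs hi)
  have hlog : 1 + Real.log #G ≤ ℓ := by rw [hℓ]; gcongr
  have hsq : (#G * t) ^ 2 ≤ n * (#G * (τ ^ 2 * ℓ)) := by
    calc (#G * t) ^ 2 ≤ (∑ i ∈ G, ‖T (x i)‖) ^ 2 := by gcongr
      _ ≤ Module.finrank ℝ (LinearMap.range (T : X →ₗ[ℝ] Y)) *
            (#G * (τ ^ 2 * (1 + Real.log #G))) :=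
          hG.sq_sum_norm_le fun i => LinearMap.mem_range_self (T : X →ₗ[ℝ] Y) _
      _ ≤ n * (#G * (τ ^ 2 * ℓ)) := by gcongr
  have hGt : #G * t ^ 2 ≤ n * (τ ^ 2 * ℓ) := le_of_mul_le_mul_left (by linarith) hG_pos
  have ht_sq : t ^ 2 ≤ τ ^ 2 * (2 * n * ℓ / #s) := by
    rw [← mul_div_assoc, le_div_iff₀ hs_pos]
    nlinarith [sq_nonneg t]
  rw [← hτp]
  exact rpow_le_rpow_mul_of_sq_le_sq_mul (two_le_of_one_div_eq hq hp hpq) ht (by positivity)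
    (by positivity) hsmall ht_sq

lemma sum_norm_rpow_le_of_le_card (hC : IsSummingBound p q T N C) (hC0 : 0 < C)
    (hB : IsSummingBound p q T M B) (hq : 1 ≤ q) (hp : 0 < p) (hpq : 1 / q = 1 / p + 1 / 2)
    (hT : RankLE T n) (hM : 3 ≤ M) (hsmall : 2 * n * logTail M ≤ 1) (hs : #s ≤ N)
    (hMs : M ≤ #s) (hx : InWeakLqBall q s x) :
    ∑ i ∈ s, ‖T (x i)‖ ^ p ≤ B + 4 * n * C * (logTail M - logTail #s) := by
  classical
  induction s using Finset.induction_on_min_value (fun i => ‖T (x i)‖) with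
  | empty => exact absurd hMs (by simp; omega)
  | insert i s hi hmin ih =>
    rw [card_insert_of_notMem hi] at hs hMs ⊢
    rcases hMs.eq_or_lt with hMs | hMs
    · rw [← hMs, sub_self, mul_zero, add_zero]
      exact hB _ x (card_insert_of_notMem hi |>.trans hMs.symm).le hx
    have hM_le : M ≤ #s := by omega
    have hM_exp : Real.exp 1 ≤ M :=
      Real.exp_one_lt_three.le.trans (by exact_mod_cast hM)
    have hM_le_real : (M : ℝ) ≤ #s := by exact_mod_cast hM_le
    have hM_ge : (3 : ℝ) ≤ M := by exact_mod_cast hM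
    have hlog := Real.log_natCast_nonneg (#s + 1)
    push_cast at hlog
    have hweight : 2 * n * (1 + Real.log (#s + 1)) / (#s + 1) ≤ 1 := by
      refine le_trans ?_ hsmall
      rw [mul_div_assoc]
      gcongr
      exact one_add_log_div_le_logTail hM_exp (by linarith)
    have hnew := hC.rpow_le_of_forall_le_norm hC0 hq hp hpq hT
      ((card_insert_of_notMem hi).trans_le hs) (insert_nonempty i s) hx (norm_nonneg (T (x i)))
      (by simpa using hmin) (by rw [card_insert_of_notMem hi]; exact_mod_cast hweight)
    rw [card_insert_of_notMem hi] at hnew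
    have hold := ih (by omega) hM_le (hx.mono (subset_insert i s))
    have htele := one_add_log_div_sq_le_logTail_sub (a := #s) (by linarith)
    rw [sum_insert hi]
    push_cast at hnew ⊢
    calc ‖T (x i)‖ ^ p + ∑ j ∈ s, ‖T (x j)‖ ^ p
        ≤ 4 * n * C * ((1 + Real.log (#s + 1)) / (#s + 1) ^ 2) +
          (B + 4 * n * C * (logTail M - logTail #s)) := by
          refine add_le_add (hnew.trans_eq ?_) hold
          field_simp
          ring
      _ ≤ 4 * n * C * (logTail #s - logTail (#s + 1)) +
          (B + 4 * n * C * (logTail M - logTail #s)) := by gcongr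
      _ = B + 4 * n * C * (logTail M - logTail (#s + 1)) := by ring

lemma add_half (hC : IsSummingBound p q T N C) (hC0 : 0 < C) (hB : IsSummingBound p q T M B)
    (hq : 1 ≤ q) (hp : 0 < p) (hpq : 1 / q = 1 / p + 1 / 2) (hT : RankLE T n) (hM : 3 ≤ M)
    (hsmall : 8 * n * logTail M ≤ 1) : IsSummingBound p q T N (B + C / 2) := by
  intro ι s x hs hx
  rcases le_total #s M with hsM | hMs
  · exact (hB s x hsM hx).trans (by linarith)
  have hM_small : 2 * n * logTail M ≤ 1 := by
    have : 0 ≤ n * logTail M := mul_nonneg n.cast_nonneg (logTail_natCast_nonneg M)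
    linarith
  calc ∑ i ∈ s, ‖T (x i)‖ ^ p ≤ B + 4 * n * C * (logTail M - logTail #s) :=
        hC.sum_norm_rpow_le_of_le_card hC0 hB hq hp hpq hT hM hM_small hs hMs hx
    _ ≤ B + 4 * n * C * logTail M := by
        gcongr
        linarith [logTail_natCast_nonneg #s]
    _ ≤ B + C / 2 := by nlinarith

end IsSummingBound

end SummingBound

section SummingNorm

open Finset

section FiniteFamilies

variable {p : ℝ≥0∞} {ι κ : Type*} [Fintype ι] [Fintype κ]

lemma eSum_top (f : ι → ℝ≥0∞) : eSum ∞ f = ⨆ i, f i := if_pos rfl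

lemma eSum_of_ne_top (hp : p ≠ ∞) (f : ι → ℝ≥0∞) :
    eSum p f = (∑ i, f i ^ p.toReal) ^ (1 / p.toReal) := if_neg hp

lemma eSum_extend_zero (hp : p ≠ 0) {j : ι → κ} (hj : Function.Injective j) (f : ι → ℝ≥0∞) :
    eSum p (Function.extend j f 0) = eSum p f := by
  rcases eq_or_ne p ∞ with rfl | hp_top
  · rw [eSum_top, eSum_top]
    exact iSup_extend_bot hj f
  · rw [eSum_of_ne_top hp_top, eSum_of_ne_top hp_top]
    congr 1
    refine (Fintype.sum_of_injective j hj _ _ (fun k hk => ?_) fun i => ?_).symm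
    · rw [Function.extend_apply' _ _ _ (by simpa using hk), Pi.zero_apply,
        ENNReal.zero_rpow_of_pos (ENNReal.toReal_pos hp hp_top)]
    · rw [hj.extend_apply]

lemma eSum_comp_le {j : ι → κ} (hj : Function.Injective j) (f : κ → ℝ≥0∞) :
    eSum p (fun i => f (j i)) ≤ eSum p f := by
  rcases eq_or_ne p ∞ with rfl | hp_top
  · rw [eSum_top, eSum_top]
    exact iSup_comp_le f j
  · rw [eSum_of_ne_top hp_top, eSum_of_ne_top hp_top]
    gcongr
    calc ∑ i, f (j i) ^ p.toReal = ∑ k ∈ univ.map ⟨j, hj⟩, f k ^ p.toReal := by rw [sum_map]; rfl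
      _ ≤ ∑ k, f k ^ p.toReal := sum_le_univ_sum_of_nonneg fun _ => zero_le

lemma eSum_const_zero (hp : p ≠ 0) : eSum p (fun _ : ι => 0) = 0 := by
  rcases eq_or_ne p ∞ with rfl | hp_top
  · rw [eSum_top, ENNReal.iSup_zero]
  · have hp_pos := ENNReal.toReal_pos hp hp_top
    simp [eSum_of_ne_top hp_top, hp_pos]

lemma eSum_ofReal_le_ofReal_rpow_iff (hp : p ≠ 0) (hp_top : p ≠ ∞) {a : ι → ℝ} (ha : ∀ i, 0 ≤ a i)
    {C : ℝ} (hC : 0 ≤ C) :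
    eSum p (fun i => ENNReal.ofReal (a i)) ≤ ENNReal.ofReal (C ^ (1 / p.toReal)) ↔
      ∑ i, a i ^ p.toReal ≤ C := by
  have hp_pos := ENNReal.toReal_pos hp hp_top
  rw [eSum_of_ne_top hp_top, ← ENNReal.ofReal_rpow_of_nonneg hC (by positivity),
    ENNReal.rpow_le_rpow_iff (by positivity), ← ENNReal.ofReal_le_ofReal_iff hC,
    ENNReal.ofReal_sum_of_nonneg fun i _ => Real.rpow_nonneg (ha i) _]
  simp only [ENNReal.ofReal_rpow_of_nonneg (ha _) hp_pos.le]

end FiniteFamilies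

variable {X Y : Type*} [NormedAddCommGroup X] [NormedSpace ℝ X]
  [NormedAddCommGroup Y] [NormedSpace ℝ Y] {p q : ℝ≥0∞}

lemma weakLq_le_one_iff (hq : q ≠ 0) (hq_top : q ≠ ∞) {n : ℕ} {x : Fin n → X} :
    weakLq q x ≤ 1 ↔ InWeakLqBall q.toReal univ x := by
  simp only [weakLq, iSup_le_iff, Subtype.forall, InWeakLqBall]
  refine forall₂_congr fun f _ => ?_
  rw [← eSum_ofReal_le_ofReal_rpow_iff hq hq_top (fun i => abs_nonneg _) zero_le_one,
    Real.one_rpow, ENNReal.ofReal_one]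

lemma eSum_le_piN {ι : Type*} [Fintype ι] (hp : p ≠ 0) (hq : q ≠ 0) (T : X →L[ℝ] Y) {m : ℕ}
    (hm : Fintype.card ι ≤ m) (x : ι → X)
    (hx : ∀ f : X →L[ℝ] ℝ, ‖f‖ ≤ 1 → eSum q (fun i => ENNReal.ofReal |f (x i)|) ≤ 1) :
    eSum p (fun i => ENNReal.ofReal ‖T (x i)‖) ≤ piN p q m T := by
  obtain ⟨j⟩ : Nonempty (ι ↪ Fin m) :=
    Function.Embedding.nonempty_of_card_le (by simpa using hm)
  have hextend (r : ℝ≥0∞) (hr : r ≠ 0) (φ : X → ℝ≥0∞) (hφ : φ 0 = 0) :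
      eSum r (fun k => φ (Function.extend j x 0 k)) = eSum r fun i => φ (x i) := by
    rw [← eSum_extend_zero hr j.injective]
    congr 1
    funext k
    rw [Function.apply_extend φ]
    exact congrArg (fun g => Function.extend j (φ ∘ x) g k) (funext fun _ => hφ)
  have hmem : weakLq q (Function.extend j x 0) ≤ 1 := iSup_le fun f => by
    rw [hextend q hq (fun v => ENNReal.ofReal |f.1 v|) (by simp)]
    exact hx f.1 f.2
  rw [← hextend p hp (fun v => ENNReal.ofReal ‖T v‖) (by simp)]
  exact le_iSup (fun x : {x : Fin m → X // weakLq q x ≤ 1} =>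
    eSum p fun k => ENNReal.ofReal ‖T (x.1 k)‖) ⟨_, hmem⟩

lemma piN_le_ofReal_rpow_iff (hp : p ≠ 0) (hp_top : p ≠ ∞) (hq : q ≠ 0) (hq_top : q ≠ ∞)
    {T : X →L[ℝ] Y} {N : ℕ} {C : ℝ} (hC : 0 ≤ C) :
    piN p q N T ≤ ENNReal.ofReal (C ^ (1 / p.toReal)) ↔
      IsSummingBound p.toReal q.toReal T N C := by
  constructor
  · intro h ι s x hs hx
    rw [← sum_coe_sort, ← eSum_ofReal_le_ofReal_rpow_iff hp hp_top (fun _ => norm_nonneg _) hC]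
    refine (eSum_le_piN hp hq T (by simpa using hs) (fun i : s => x i) fun f hf => ?_).trans h
    rw [← ENNReal.ofReal_one, ← Real.one_rpow (1 / q.toReal),
      eSum_ofReal_le_ofReal_rpow_iff hq hq_top (fun _ => abs_nonneg _) zero_le_one,
      sum_coe_sort s fun i => |f (x i)| ^ q.toReal]
    exact hx f hf
  · refine fun h => iSup_le fun x => ?_
    rw [eSum_ofReal_le_ofReal_rpow_iff hp hp_top (fun _ => norm_nonneg _) hC]
    exact h univ x.1 (by simp) ((weakLq_le_one_iff hq hq_top).1 x.2)

lemma piN_zero (hp : p ≠ 0) (N : ℕ) : piN p q N (0 : X →L[ℝ] Y) = 0 := by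
  simp [piN, eSum_const_zero hp]

lemma piN_top_le (hq : q ≠ 0) (T : X →L[ℝ] Y) (N : ℕ) {m : ℕ} (hm : 1 ≤ m) :
    piN ∞ q N T ≤ piN ∞ q m T := by
  refine iSup_le fun x => ?_
  rw [eSum_top]
  refine iSup_le fun k => ?_
  have hsingle := eSum_le_piN ENNReal.top_ne_zero hq T (ι := Unit) (by simpa using hm)
    (fun _ => x.1 k) fun f hf =>
      (eSum_comp_le (j := fun _ : Unit => k) (Function.injective_of_subsingleton _) _).trans
        (iSup_le_iff.1 x.2 ⟨f, hf⟩)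
  rwa [eSum_top, ciSup_const] at hsingle

lemma piN_ne_top (hp : p ≠ 0) (hp_top : p ≠ ∞) (hq : q ≠ 0) (hq_top : q ≠ ∞)
    (T : X →L[ℝ] Y) (N : ℕ) : piN p q N T ≠ ∞ := by
  have hbound := isSummingBound_mul_opNorm_rpow (p := p.toReal) (q := q.toReal)
    ENNReal.toReal_nonneg (ENNReal.toReal_pos hq hq_top) T N
  exact ne_top_of_le_ne_top ENNReal.ofReal_ne_top
    ((piN_le_ofReal_rpow_iff hp hp_top hq hq_top (by positivity)).2 hbound)

lemma isSummingBound_toReal_piN_rpow (hp : p ≠ 0) (hp_top : p ≠ ∞) (hq : q ≠ 0) (hq_top : q ≠ ∞)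
    (T : X →L[ℝ] Y) (N : ℕ) :
    IsSummingBound p.toReal q.toReal T N ((piN p q N T).toReal ^ p.toReal) := by
  rw [← piN_le_ofReal_rpow_iff hp hp_top hq hq_top (by positivity), one_div,
    Real.rpow_rpow_inv ENNReal.toReal_nonneg (ENNReal.toReal_pos hp hp_top).ne',
    ENNReal.ofReal_toReal (piN_ne_top hp hp_top hq hq_top T N)]

lemma toReal_piN_rpow_le (hp : p ≠ 0) (hp_top : p ≠ ∞) (hq : q ≠ 0) (hq_top : q ≠ ∞)
    {T : X →L[ℝ] Y} {N : ℕ} {C : ℝ} (hC0 : 0 ≤ C)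
    (hC : IsSummingBound p.toReal q.toReal T N C) : (piN p q N T).toReal ^ p.toReal ≤ C := by
  have h := (piN_le_ofReal_rpow_iff hp hp_top hq hq_top hC0).2 hC
  rw [one_div] at h
  exact (Real.le_rpow_inv_iff_of_pos ENNReal.toReal_nonneg hC0 (ENNReal.toReal_pos hp hp_top)).1
    (ENNReal.toReal_le_of_le_ofReal (by positivity) h)

lemma one_le_natCast_mul_one_add_log {n : ℕ} (hn : 1 ≤ n) :
    1 ≤ (n : ℝ) * (1 + Real.log n) := by
  have hn_one : (1 : ℝ) ≤ n := by exact_mod_cast hn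
  nlinarith [Real.log_natCast_nonneg n]

lemma mul_logTail_floor_le_one {n : ℕ} (hn : 1 ≤ n) :
    8 * n * logTail (200 * ⌊(n : ℝ) * (1 + Real.log n)⌋₊ : ℕ) ≤ 1 := by
  have hlog_n : 0 ≤ Real.log n := Real.log_natCast_nonneg n
  have hx := one_le_natCast_mul_one_add_log hn
  set ℓ := Real.log n
  set m := ⌊n * (1 + ℓ)⌋₊
  have hm_one : (1 : ℝ) ≤ m := by exact_mod_cast Nat.one_le_floor_iff _ |>.2 hx
  have hm_le : (m : ℝ) ≤ n * (1 + ℓ) := Nat.floor_le (by positivity)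
  have hle_m : n * (1 + ℓ) ≤ 2 * m := by
    have hlt : n * (1 + ℓ) < m + 1 := Nat.lt_floor_add_one _
    linarith
  have hlog_m : Real.log m ≤ 2 * ℓ := by
    calc Real.log m ≤ Real.log (n * (1 + ℓ)) := by gcongr
      _ = ℓ + Real.log (1 + ℓ) := Real.log_mul (by positivity) (by positivity)
      _ ≤ 2 * ℓ := by linarith [Real.log_le_sub_one_of_pos (x := 1 + ℓ) (by positivity)]
  have hlog_two_hundred : Real.log 200 ≤ 6 := by
    rw [Real.log_le_iff_le_exp (by norm_num)]
    calc (200 : ℝ) ≤ 2.7 ^ 6 := by norm_num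
      _ ≤ Real.exp 1 ^ 6 := by
          gcongr
          linarith [Real.exp_one_gt_d9]
      _ = Real.exp 6 := by rw [← Real.exp_nat_mul]; norm_num
  rw [logTail, Nat.cast_mul, Nat.cast_ofNat, Real.log_mul (by norm_num) (by positivity),
    ← mul_div_assoc, div_le_one (by positivity)]
  nlinarith

lemma one_div_toReal_eq (hp : p ≠ 0) (hpq : 1 / q = 1 / p + 1 / 2) :
    1 / q.toReal = 1 / p.toReal + 1 / 2 := by
  have h := congrArg ENNReal.toReal hpq
  rw [ENNReal.toReal_add (by simpa using hp) (by simp)] at h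
  simpa using h

lemma piN_le_mul_piN {n m : ℕ} {T : X →L[ℝ] Y} (hT : RankLE T n) (hq : 1 ≤ q) (hq_top : q ≠ ∞)
    (hp : p ≠ 0) (hp_top : p ≠ ∞) (hpq : 1 / q = 1 / p + 1 / 2) (hm : 1 ≤ m)
    (hsmall : 8 * n * logTail (200 * m : ℕ) ≤ 1) (N : ℕ) :
    piN p q N T ≤ 20 * piN p q m T := by
  have hq0 : q ≠ 0 := (one_pos.trans_le hq).ne'
  have hp_pos := ENNReal.toReal_pos hp hp_top
  have hq_one : 1 ≤ q.toReal := by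
    simpa using ENNReal.toReal_mono hq_top hq
  have hpq_real := one_div_toReal_eq hp hpq
  set a := (piN p q m T).toReal
  set b := (piN p q N T).toReal
  have ha0 : 0 ≤ a := ENNReal.toReal_nonneg
  have hb0 : 0 ≤ b := ENNReal.toReal_nonneg
  have hbound : b ^ p.toReal ≤ 400 * a ^ p.toReal := by
    rcases hb0.eq_or_lt with hb_zero | hb_pos
    · rw [← hb_zero, Real.zero_rpow hp_pos.ne']
      positivity
    have hM := (isSummingBound_toReal_piN_rpow hp hp_top hq0 hq_top T m).nat_mul 200
    have hhalf := (isSummingBound_toReal_piN_rpow hp hp_top hq0 hq_top T N).add_half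
      (by positivity) hM hq_one hp_pos hpq_real hT (by omega) hsmall
    have h := toReal_piN_rpow_le hp hp_top hq0 hq_top (by positivity) hhalf
    push_cast at h
    linarith
  have hle : b ≤ 20 * a := by
    rw [← Real.rpow_le_rpow_iff hb0 (by positivity) hp_pos, Real.mul_rpow (by norm_num) ha0]
    refine hbound.trans ?_
    gcongr
    calc (400 : ℝ) = 20 ^ (2 : ℝ) := by norm_num
      _ ≤ 20 ^ p.toReal := by
          gcongr
          · norm_num
          · exact two_le_of_one_div_eq hq_one hp_pos hpq_real
  rw [← ENNReal.ofReal_toReal (piN_ne_top hp hp_top hq0 hq_top T N),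
    ← ENNReal.ofReal_toReal (piN_ne_top hp hp_top hq0 hq_top T m),
    ← ENNReal.ofReal_ofNat 20, ← ENNReal.ofReal_mul (by norm_num)]
  exact ENNReal.ofReal_le_ofReal hle

lemma RankLE.eq_zero {T : X →L[ℝ] Y} (hT : RankLE T 0) : T = 0 := by
  obtain ⟨_, hrank⟩ := hT
  have hrange := Submodule.finrank_eq_zero.1 (Nat.le_zero.1 hrank)
  exact ContinuousLinearMap.coe_injective (LinearMap.range_eq_bot.1 hrange)

theorem statement1_general (hq : 1 ≤ q) (hpq : 1 / q = 1 / p + 1 / 2) {n : ℕ} {T : X →L[ℝ] Y}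
    (hT : RankLE T n) : piPQ p q T ≤ 20 * piN p q ⌊(n : ℝ) * (1 + Real.log n)⌋₊ T := by
  have hq0 : q ≠ 0 := (one_pos.trans_le hq).ne'
  have hq_top : q ≠ ∞ := by
    rintro rfl
    simp [eq_comm (a := (0 : ℝ≥0∞))] at hpq
  have hp : p ≠ 0 := by
    rintro rfl
    simp [hq0] at hpq
  refine iSup_le fun N => ?_
  rcases n.eq_zero_or_pos with rfl | hn
  · rw [hT.eq_zero, piN_zero hp]
    exact zero_le
  have hm : 1 ≤ ⌊(n : ℝ) * (1 + Real.log n)⌋₊ :=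
    (Nat.one_le_floor_iff _).2 (one_le_natCast_mul_one_add_log hn)
  rcases eq_or_ne p ∞ with rfl | hp_top
  · exact (piN_top_le hq0 T N hm).trans (le_mul_of_one_le_left' (by norm_num))
  · exact piN_le_mul_piN hT hq hq_top hp hp_top hpq hm (mul_logTail_floor_le_one hn) N

end SummingNorm

/-- for `1 ≤ q < p ≤ ∞` with `1/q = 1/p + 1/2` (i.e. `r = 2`),
there is an absolute constant `c` such that `π_{p,q}(T) ≤ c · π_{p,q}^{⌊n(1+ln n)⌋}(T)`
for every operator `T` between real Banach spaces of rank at most `n`. -/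
theorem statement1 :
    ∃ c : ℝ≥0, 0 < c ∧
      ∀ (q p : ℝ≥0∞), 1 ≤ q → q < p → 1 / q = 1 / p + 1 / 2 →
        ∀ (X Y : Type*) [NormedAddCommGroup X] [NormedSpace ℝ X] [CompleteSpace X]
          [NormedAddCommGroup Y] [NormedSpace ℝ Y] [CompleteSpace Y]
          (n : ℕ) (T : X →L[ℝ] Y), RankLE T n →
          piPQ p q T ≤ (c : ℝ≥0∞) * piN p q (⌊(n : ℝ) * (1 + Real.log n)⌋₊) T := by
  exact ⟨20, by norm_num, fun q p hq _ hpq X Y _ _ _ _ _ _ n T hT =>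
    by exact_mod_cast statement1_general hq hpq hT⟩

end
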